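/- arXiv:math/0108043 — 2 statements merged into one kernel-verified Lean document; each statement's English description precedes it below -/
import Mathlib

section
/- Let k ≥ 3. Let F₁(X) = Σ_{n≥0} |{π ∈ S_n : π avoids 132 and 12⋯k, and contains 213⋯k exactly once}|·Xⁿ and F₂(X) = Σ_{n≥0} |{π ∈ S_n : π avoids 132 and 213⋯k, and contains 12⋯k exactly once}|·Xⁿ, as formal power series in ℚ⟦X⟧. Set q_m = p_m − X²·p_{m−2}. Then F₁(X)·q_{k−1}(X)² = X^k and F₂(X)·q_{k−1}(X)² = X^k. (Equivalently, both series equal x / (U_{k−1}(1/(2√x)) − x·U_{k−3}(1/(2√x)))².) -/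
/-- A pattern is a permutation of `{1,…,k}` for some `k`. -/
def Pattern : Type := Σ k : ℕ, Equiv.Perm (Fin k)

/-- `IsOccurrence τ π f` says that the strictly increasing tuple of indices `f` is an
occurrence of the pattern `τ` in the permutation `π`, i.e. `π ∘ f` is order-isomorphic
to `τ`. -/
def IsOccurrence {k n : ℕ} (τ : Equiv.Perm (Fin k)) (π : Equiv.Perm (Fin n))
    (f : Fin k → Fin n) : Prop :=
  StrictMono f ∧ ∀ a b : Fin k, τ a < τ b ↔ π (f a) < π (f b)

/-- `π` contains the pattern `τ` (at least once). -/
def Contains {k n : ℕ} (τ : Equiv.Perm (Fin k)) (π : Equiv.Perm (Fin n)) : Prop :=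
  ∃ f : Fin k → Fin n, IsOccurrence τ π f

/-- `π` contains the pattern `τ` exactly once. -/
def ContainsOnce {k n : ℕ} (τ : Equiv.Perm (Fin k)) (π : Equiv.Perm (Fin n)) : Prop :=
  ∃! f : Fin k → Fin n, IsOccurrence τ π f

/-- `π` avoids every pattern in the set `T`. -/
def AvoidsSet {n : ℕ} (T : Set Pattern) (π : Equiv.Perm (Fin n)) : Prop :=
  ∀ p ∈ T, ¬ Contains p.2 π

/-- `f_T(n)`: the number of permutations of `{1,…,n}` avoiding every pattern in `T`. -/
noncomputable def avoidCount (T : Set Pattern) (n : ℕ) : ℕ :=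
  Nat.card {π : Equiv.Perm (Fin n) // AvoidsSet T π}

/-- The pattern `132 ∈ S₃` (zero-indexed: `0 ↦ 0, 1 ↦ 2, 2 ↦ 1`). -/
noncomputable def p132 : Equiv.Perm (Fin 3) := Equiv.ofBijective ![0, 2, 1] (by decide)

/-- `pU (m+1)` is the polynomial `p_m(X) = X^{m/2}·U_m(1/(2√X))` built from the Chebyshev
recurrence: `pU 0 = p_{−1} = 0`, `pU 1 = p_0 = 1`, and `p_{m+1} = p_m − X·p_{m−1}`. -/
noncomputable def pU : ℕ → Polynomial ℚ
  | 0 => 0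
  | 1 => 1
  | m + 2 => pU (m + 1) - Polynomial.X * pU m

/-!
Split a `132`-avoiding word at its maximum `M`, as `u M v`. Every letter of `u` exceeds every letter
of `v`, and `u`, `v` are again `132`-avoiding, so `132`-avoiding permutations are binary trees. An
occurrence of `σ ⊕ 1` in `u M v` lies inside `u`, inside `v`, or is an occurrence of `σ` in `u`
followed by `M`. Both `12⋯k` and `213⋯k` arise from the patterns `12` and `21` by repeating
`σ ↦ σ ⊕ 1`.

Let `G_k` count the `132`-avoiding permutations that avoid both patterns of length `k + 2`, and let
`F_k` count those that avoid one of the two and contain the other once. An occurrence of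
`12⋯(k+3)` in `u` forces two of `12⋯(k+2)` in `u`, and one of `213⋯(k+3)` forces one of each
pattern of length `k + 2`. Hence the splitting gives
`G_{k+1} = 1 + X G_k G_{k+1}` and `F_{k+1} = X (G_k F_{k+1} + F_k G_{k+1})`, with `G_0 = 1 + X` and
`F_0 = X²`. The series `q_k` satisfy the Chebyshev recurrence `q_{k+2} = q_{k+1} - X q_k`, whence
`G_k q_{k+1} = q_k` and `F_k q_{k+1}² = X^{k+2}`.
-/

open BinaryTree PowerSeries
open scoped List

/-! ### Occurrences of patterns in words -/

/-- The direct sum `τ ⊕ 1`: the permutation `τ` followed by a new maximum. -/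
def addMax {k : ℕ} (τ : Equiv.Perm (Fin k)) : Equiv.Perm (Fin (k + 1)) :=
  finSuccEquivLast.symm.permCongr τ.optionCongr

lemma addMax_castSucc {k : ℕ} (τ : Equiv.Perm (Fin k)) (i : Fin k) :
    addMax τ i.castSucc = (τ i).castSucc := by
  simp [addMax]

lemma addMax_last {k : ℕ} (τ : Equiv.Perm (Fin k)) : addMax τ (Fin.last k) = Fin.last k := by
  simp [addMax]

lemma addMax_one (k : ℕ) : addMax (1 : Equiv.Perm (Fin k)) = 1 := by
  ext i
  cases i using Fin.lastCases with
  | last => rw [addMax_last, Equiv.Perm.one_apply]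
  | cast i => rw [addMax_castSucc, Equiv.Perm.one_apply, Equiv.Perm.one_apply]

lemma addMax_swap_zero_one (k : ℕ) :
    addMax (Equiv.swap (0 : Fin (k + 2)) 1) = Equiv.swap 0 1 := by
  ext i
  cases i using Fin.lastCases with
  | last =>
    rw [addMax_last, Equiv.swap_apply_of_ne_of_ne] <;> simp [Fin.ext_iff]
  | cast i =>
    rw [addMax_castSucc, ← (Fin.castSucc_injective _).swap_apply]
    rfl

section Words

variable {α : Type*} [LinearOrder α] {k : ℕ} {τ : Equiv.Perm (Fin k)} {u v : List α} {M : α}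

/-- The word `s` is order-isomorphic to the pattern `τ`. -/
def HasShape (τ : Equiv.Perm (Fin k)) (s : List α) : Prop :=
  ∃ g : Fin k → α, s = List.ofFn g ∧ ∀ a b, τ a < τ b ↔ g a < g b

lemma HasShape.length_eq {s : List α} (h : HasShape τ s) : s.length = k := by
  obtain ⟨g, rfl, -⟩ := h
  exact List.length_ofFn

lemma hasShape_ofFn {g : Fin k → α} :
    HasShape τ (List.ofFn g) ↔ ∀ a b, τ a < τ b ↔ g a < g b :=
  ⟨fun ⟨_, hg, h⟩ => List.ofFn_injective hg ▸ h, fun h => ⟨g, rfl, h⟩⟩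

lemma hasShape_addMax {s : List α} :
    HasShape (addMax τ) s ↔ ∃ r z, s = r ++ [z] ∧ HasShape τ r ∧ ∀ x ∈ r, x < z := by
  constructor
  · rintro ⟨g, rfl, hg⟩
    refine ⟨List.ofFn fun i => g i.castSucc, g (Fin.last k), by
      rw [List.ofFn_succ', List.concat_eq_append], hasShape_ofFn.2 fun a b => ?_, ?_⟩
    · rw [← hg, addMax_castSucc, addMax_castSucc, Fin.castSucc_lt_castSucc_iff]
    · simp only [List.forall_mem_ofFn_iff]
      exact fun i => (hg _ _).1 (by rw [addMax_castSucc, addMax_last]; exact Fin.castSucc_lt_last _)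
  · rintro ⟨_, z, rfl, ⟨g, rfl, hg⟩, hz⟩
    simp only [List.forall_mem_ofFn_iff] at hz
    refine ⟨Fin.snoc (α := fun _ => α) g z, ?_, fun a b => ?_⟩
    · simp only [List.ofFn_succ', Fin.snoc_castSucc, Fin.snoc_last, List.concat_eq_append]
    · cases a using Fin.lastCases <;> cases b using Fin.lastCases <;>
        simp [addMax_castSucc, addMax_last, hg, hz, (hz _).not_gt, Fin.castSucc_lt_last,
          (Fin.castSucc_lt_last _).not_gt]

open Classical in
/-- The occurrences of `τ` in the word `w`, each recorded by its letters. On a word without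
repeated letters this amounts to recording the positions. -/
noncomputable def occurrences (τ : Equiv.Perm (Fin k)) (w : List α) : Finset (List α) :=
  {s ∈ w.sublists.toFinset | HasShape τ s}

lemma mem_occurrences {w s : List α} : s ∈ occurrences τ w ↔ s <+ w ∧ HasShape τ s := by
  simp [occurrences]

lemma append_singleton_sublist_append_cons {r : List α} {z : α} (hr : ∀ x ∈ r, x < z)
    (hv : ∀ y ∈ v, y < M) (huv : ∀ x ∈ u, ∀ y ∈ v, y < x) :
    r ++ [z] <+ u ++ M :: v ↔ r ++ [z] <+ u ∨ (z = M ∧ r <+ u) ∨ r ++ [z] <+ v := by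
  constructor
  · rw [List.sublist_append_iff]
    rintro ⟨s₁, s₂, hs, hs₁, hs₂⟩
    obtain rfl | ⟨s₂, z', rfl⟩ := s₂.eq_nil_or_concat'
    · exact .inl (by simpa [hs] using hs₁)
    obtain ⟨rfl, hz⟩ := List.append_inj' (hs.trans (List.append_assoc ..).symm) rfl
    obtain rfl : z = z' := by simpa using hz
    have hz_mem : z ∈ M :: v := hs₂.subset (by simp)
    obtain rfl | hz_mem := List.mem_cons.1 hz_mem
    · cases s₂ with
      | nil => exact .inr (.inl ⟨rfl, by simpa using hs₁⟩)
      | cons a s₂ =>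
        have hsub := List.Sublist.of_cons_of_ne (hr a (by simp)).ne hs₂
        exact absurd (hv z (hsub.subset (by simp))) (lt_irrefl z)
    · have hs₁_nil : s₁ = [] := List.eq_nil_iff_forall_not_mem.2 fun x hx =>
        (hr x (by simp [hx])).asymm (huv x (hs₁.subset hx) z hz_mem)
      subst hs₁_nil
      obtain hsub | ⟨t, ht, -⟩ := List.sublist_cons_iff.1 hs₂
      · exact .inr (.inr hsub)
      · have hM : M ∈ s₂ ++ [z] := by simp [ht]
        have hMz : M ≤ z := by
          rcases List.mem_append.1 hM with h | h
          · exact (hr M h).le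
          · exact (List.mem_singleton.1 h).le
        exact absurd (hv z hz_mem) hMz.not_gt
  · rintro (h | ⟨rfl, h⟩ | h)
    · exact h.trans (List.sublist_append_left ..)
    · exact h.append (List.singleton_sublist.2 (by simp))
    · exact h.trans ((List.sublist_cons_self ..).trans (List.sublist_append_right ..))

lemma occurrences_addMax_append_cons (hu : ∀ x ∈ u, x < M) (hv : ∀ y ∈ v, y < M)
    (huv : ∀ x ∈ u, ∀ y ∈ v, y < x) :
    occurrences (addMax τ) (u ++ M :: v) =
      (occurrences (addMax τ) u ∪ (occurrences τ u).image (· ++ [M])) ∪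
        occurrences (addMax τ) v := by
  ext s
  simp only [Finset.mem_union, Finset.mem_image, mem_occurrences, hasShape_addMax]
  constructor
  · rintro ⟨hs, r, z, rfl, hτ, hr⟩
    rw [append_singleton_sublist_append_cons hr hv huv] at hs
    obtain hs | ⟨rfl, hs⟩ | hs := hs
    · exact .inl (.inl ⟨hs, r, z, rfl, hτ, hr⟩)
    · exact .inl (.inr ⟨r, ⟨hs, hτ⟩, rfl⟩)
    · exact .inr ⟨hs, r, z, rfl, hτ, hr⟩
  · rintro ((⟨hs, r, z, rfl, hτ, hr⟩ | ⟨r, ⟨hs, hτ⟩, rfl⟩) | ⟨hs, r, z, rfl, hτ, hr⟩)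
    · exact ⟨hs.trans (List.sublist_append_left ..), r, z, rfl, hτ, hr⟩
    · exact ⟨hs.append (List.singleton_sublist.2 (by simp)), r, M, rfl, hτ,
        fun x hx => hu x (hs.subset hx)⟩
    · exact ⟨hs.trans ((List.sublist_cons_self ..).trans (List.sublist_append_right ..)),
        r, z, rfl, hτ, hr⟩

lemma card_occurrences_addMax_append_cons (hu : ∀ x ∈ u, x < M) (hv : ∀ y ∈ v, y < M)
    (huv : ∀ x ∈ u, ∀ y ∈ v, y < x) :
    (occurrences (addMax τ) (u ++ M :: v)).card =
      (occurrences (addMax τ) u).card + (occurrences τ u).card +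
        (occurrences (addMax τ) v).card := by
  have hdisj_image {w : List α} (hw : ∀ x ∈ w, x < M) :
      Disjoint (occurrences (addMax τ) w) ((occurrences τ u).image (· ++ [M])) := by
    rw [Finset.disjoint_left]
    intro s hs hs'
    obtain ⟨r, -, rfl⟩ := Finset.mem_image.1 hs'
    exact (hw M ((mem_occurrences.1 hs).1.subset (by simp))).false
  have hdisj : Disjoint (occurrences (addMax τ) u) (occurrences (addMax τ) v) := by
    rw [Finset.disjoint_left]
    intro s hs hs'
    obtain ⟨hsu, hτ⟩ := mem_occurrences.1 hs
    obtain ⟨r, z, rfl, -⟩ := hasShape_addMax.1 hτ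
    have hz : z ∈ r ++ [z] := by simp
    exact (huv z (hsu.subset hz) z ((mem_occurrences.1 hs').1.subset hz)).false
  rw [occurrences_addMax_append_cons hu hv huv,
    Finset.card_union_of_disjoint (Finset.disjoint_union_left.2 ⟨hdisj, (hdisj_image hv).symm⟩),
    Finset.card_union_of_disjoint (hdisj_image hu),
    Finset.card_image_of_injective _ (List.append_left_injective [M])]

lemma card_occurrences_one_zero (w : List α) :
    (occurrences (1 : Equiv.Perm (Fin 0)) w).card = 1 := by
  rw [Finset.card_eq_one]
  refine ⟨[], Finset.ext fun s => ?_⟩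
  rw [mem_occurrences, Finset.mem_singleton]
  constructor
  · rintro ⟨-, hs⟩
    exact List.length_eq_zero_iff.1 hs.length_eq
  · rintro rfl
    exact ⟨List.nil_sublist w, Fin.elim0, rfl, fun a => a.elim0⟩

lemma hasShape_one_pair {x y : α} : HasShape (1 : Equiv.Perm (Fin 2)) [x, y] ↔ x < y := by
  have hofFn : [x, y] = List.ofFn ![x, y] := by simp
  rw [hofFn, hasShape_ofFn]
  simpa [Fin.forall_fin_two] using le_of_lt

lemma hasShape_swap_pair {x y : α} : HasShape (Equiv.swap (0 : Fin 2) 1) [x, y] ↔ y < x := by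
  have hofFn : [x, y] = List.ofFn ![x, y] := by simp
  rw [hofFn, hasShape_ofFn]
  simpa [Fin.forall_fin_two] using le_of_lt

lemma card_occurrences_one_add_card_occurrences_swap {w : List α} (hw : w.Nodup) :
    (occurrences (1 : Equiv.Perm (Fin 2)) w).card +
      (occurrences (Equiv.swap (0 : Fin 2) 1) w).card = w.length.choose 2 := by
  have hunion : occurrences (1 : Equiv.Perm (Fin 2)) w ∪
      occurrences (Equiv.swap (0 : Fin 2) 1) w = (w.sublistsLen 2).toFinset := by
    ext s
    simp only [Finset.mem_union, mem_occurrences, List.mem_toFinset, List.mem_sublistsLen,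
      ← and_or_left, and_congr_right_iff]
    intro hs
    constructor
    · rintro (h | h) <;> exact h.length_eq
    · intro hlen
      obtain ⟨x, y, rfl⟩ := List.length_eq_two.1 hlen
      rw [hasShape_one_pair, hasShape_swap_pair]
      have hne := hs.nodup hw
      simpa [lt_or_lt_iff_ne] using hne
  rw [← Finset.card_union_of_disjoint, hunion,
    List.toFinset_card_of_nodup (List.nodup_sublistsLen 2 hw), List.length_sublistsLen]
  rw [Finset.disjoint_left]
  intro s hs hs'
  have hs := (mem_occurrences.1 hs).2
  obtain ⟨x, y, rfl⟩ := List.length_eq_two.1 hs.length_eq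
  exact (hasShape_one_pair.1 hs).asymm (hasShape_swap_pair.1 (mem_occurrences.1 hs').2)

end Words

section Avoids132

variable {α : Type*} [LinearOrder α] {u v : List α} {M : α}

/-- No three letters of the word, read from left to right, form the pattern `132`. -/
def Avoids132 (w : List α) : Prop :=
  ∀ x y z, [x, y, z] <+ w → x < z → y ≤ z

lemma Avoids132.sublist (hv : Avoids132 v) (h : u <+ v) : Avoids132 u :=
  fun x y z hs => hv x y z (hs.trans h)

lemma avoids132_nil : Avoids132 ([] : List α) :=
  fun _ _ _ h => absurd h (by simp)

lemma avoids132_append_cons (hu : ∀ x ∈ u, x < M) (hv : ∀ y ∈ v, y < M) :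
    Avoids132 (u ++ M :: v) ↔ Avoids132 u ∧ Avoids132 v ∧ ∀ x ∈ u, ∀ y ∈ v, y ≤ x := by
  constructor
  · refine fun h => ⟨h.sublist (List.sublist_append_left ..),
      h.sublist ((List.sublist_cons_self ..).trans (List.sublist_append_right ..)),
      fun x hx y hy => ?_⟩
    have hsub : [x, M, y] <+ u ++ M :: v :=
      (List.singleton_sublist.2 hx).append ((List.singleton_sublist.2 hy).cons_cons M)
    exact le_of_not_gt fun hxy => (hv y hy).not_ge (h x M y hsub hxy)
  · rintro ⟨hu132, hv132, huv⟩ x y z hs hxz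
    obtain ⟨s₁, s₂, hxyz, hs₁, hs₂⟩ := List.sublist_append_iff.1 hs
    match s₁ with
    | [] =>
      obtain rfl : s₂ = [x, y, z] := by simpa using hxyz.symm
      have hz : z ∈ v := hs₂.tail.subset (by simp)
      refine hv132 x y z (List.Sublist.of_cons_of_ne ?_ hs₂) hxz
      exact (hxz.trans (hv z hz)).ne
    | [a] =>
      obtain ⟨rfl, rfl⟩ : a = x ∧ s₂ = [y, z] := by simpa [eq_comm] using hxyz
      have hz : z ∈ v := hs₂.tail.subset (by simp)
      exact absurd hxz (huv a (hs₁.subset (by simp)) z hz).not_gt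
    | [a, b] =>
      obtain ⟨rfl, rfl, rfl⟩ : a = x ∧ b = y ∧ s₂ = [z] := by simpa [eq_comm] using hxyz
      obtain rfl | hz := List.mem_cons.1 (List.singleton_sublist.1 hs₂)
      · exact (hu b (hs₁.subset (by simp))).le
      · exact absurd hxz (huv a (hs₁.subset (by simp)) z hz).not_gt
    | a :: b :: c :: s₁ =>
      obtain ⟨rfl, rfl, rfl, rfl, -⟩ : a = x ∧ b = y ∧ c = z ∧ s₁ = [] ∧ s₂ = [] := by
        simpa [eq_comm] using hxyz
      exact hu132 a b c hs₁ hxz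

end Avoids132

/-! ### Words encoded by trees -/

/-- The `132`-avoiding word on the letters `o, …, o + t.numNodes - 1` encoded by the tree `t`: the
root is the largest letter, and every letter of the left subtree exceeds every letter of the right
one. -/
def treeWord : BinaryTree Unit → ℕ → List ℕ
  | .nil, _ => []
  | .node _ l r, o =>
    treeWord l (o + r.numNodes) ++ (o + (r.numNodes + l.numNodes)) :: treeWord r o

lemma perm_range'_succ_iff_of_append_cons {u v : List ℕ} {o n : ℕ} :
    u ++ (o + n) :: v ~ List.range' o (n + 1) ↔ v ++ u ~ List.range' o n := by
  rw [List.range'_1_concat, List.perm_middle.congr_left, ← List.perm_append_comm.congr_left,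
    (List.perm_append_comm (l₁ := List.range' o n)).congr_right, List.singleton_append,
    List.perm_cons, List.perm_append_comm.congr_left]

lemma treeWord_perm_range' (t : BinaryTree Unit) (o : ℕ) :
    treeWord t o ~ List.range' o t.numNodes := by
  induction t using unitRecOn generalizing o with
  | base => rfl
  | ind l r hl hr =>
    rw [treeWord, numNodes, add_comm l.numNodes, perm_range'_succ_iff_of_append_cons,
      ← List.range'_append_1]
    exact (hr o).append (hl _)

lemma length_treeWord (t : BinaryTree Unit) (o : ℕ) : (treeWord t o).length = t.numNodes := by
  simpa using (treeWord_perm_range' t o).length_eq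

lemma nodup_treeWord (t : BinaryTree Unit) (o : ℕ) : (treeWord t o).Nodup :=
  (treeWord_perm_range' t o).nodup_iff.2 List.nodup_range'

lemma mem_treeWord {t : BinaryTree Unit} {o x : ℕ} :
    x ∈ treeWord t o ↔ o ≤ x ∧ x < o + t.numNodes := by
  rw [(treeWord_perm_range' t o).mem_iff, List.mem_range'_1]

lemma treeWord_injective (o : ℕ) : Function.Injective (treeWord · o) := by
  intro t t' h
  induction t using unitRecOn generalizing t' o with
  | base => cases t' with
    | nil => rfl
    | node _ l' r' => simp [treeWord] at h
  | ind l r hl hr => cases t' with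
    | nil => simp [treeWord] at h
    | node _ l' r' =>
      have hlen := congrArg List.length h
      simp only [length_treeWord, numNodes] at hlen
      have hmax : o + (r'.numNodes + l'.numNodes) = o + (r.numNodes + l.numNodes) := by omega
      simp only [treeWord, hmax] at h
      rw [List.append_cons_inj_of_notMem (by rw [mem_treeWord]; omega)
        (by rw [mem_treeWord]; omega)] at h
      obtain ⟨hleft, -, hright⟩ := h
      obtain rfl := hr o hright
      obtain rfl := hl _ hleft
      rfl

lemma avoids132_treeWord (t : BinaryTree Unit) (o : ℕ) : Avoids132 (treeWord t o) := by
  induction t using unitRecOn generalizing o with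
  | base => exact avoids132_nil
  | ind l r hl hr =>
    rw [treeWord, avoids132_append_cons]
    · refine ⟨hl _, hr _, fun x hx y hy => ?_⟩
      rw [mem_treeWord] at hx hy
      omega
    all_goals
      intro x hx
      rw [mem_treeWord] at hx
      omega

lemma perm_range'_of_append_perm_range' {u v : List ℕ} {o n : ℕ} (h : v ++ u ~ List.range' o n)
    (huv : ∀ x ∈ u, ∀ y ∈ v, y ≤ x) :
    v ~ List.range' o v.length ∧ u ~ List.range' (o + v.length) u.length := by
  have hlen : v.length + u.length = n := by simpa using h.length_eq
  have hsort : v.mergeSort ++ u.mergeSort =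
      List.range' o v.length ++ List.range' (o + v.length) u.length := by
    rw [List.range'_append_1, hlen]
    refine List.Perm.eq_of_pairwise' (r := (· ≤ ·)) ?_ List.pairwise_le_range'
      (((List.mergeSort_perm ..).append (List.mergeSort_perm ..)).trans h)
    refine List.pairwise_append.2 ⟨by simpa using List.pairwise_mergeSort' (r := (· ≤ ·)) v,
      by simpa using List.pairwise_mergeSort' (r := (· ≤ ·)) u, fun y hy x hx => ?_⟩
    exact huv x (List.mem_mergeSort.1 hx) y (List.mem_mergeSort.1 hy)
  obtain ⟨hv, hu⟩ := List.append_inj hsort (by simp)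
  exact ⟨hv ▸ (List.mergeSort_perm ..).symm, hu ▸ (List.mergeSort_perm ..).symm⟩

lemma exists_treeWord_eq {w : List ℕ} {o n : ℕ} (hw : w ~ List.range' o n) (h132 : Avoids132 w) :
    ∃ t, treeWord t o = w := by
  induction hlen : w.length using Nat.strong_induction_on generalizing w o n with
  | _ _ ih =>
  subst hlen
  cases n with
  | zero => exact ⟨.nil, (List.perm_nil.1 hw).symm⟩
  | succ n =>
    obtain ⟨u, v, rfl⟩ := List.append_of_mem (hw.mem_iff.2 (by simp : o + n ∈ _))
    rw [perm_range'_succ_iff_of_append_cons] at hw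
    have hlt : ∀ x ∈ v ++ u, x < o + n := fun x hx => (List.mem_range'_1.1 (hw.subset hx)).2
    obtain ⟨hu132, hv132, huv⟩ := (avoids132_append_cons
      (fun x hx => hlt x (by simp [hx])) (fun y hy => hlt y (by simp [hy]))).1 h132
    obtain ⟨hv, hu⟩ := perm_range'_of_append_perm_range' hw huv
    obtain ⟨r, hr⟩ := ih v.length (by grind) hv hv132 rfl
    obtain ⟨l, hl⟩ := ih u.length (by simp) hu hu132 rfl
    have hr_nodes : v.length = r.numNodes := by rw [← hr, length_treeWord]
    have hl_nodes : u.length = l.numNodes := by rw [← hl, length_treeWord]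
    have hn : v.length + u.length = n := by simpa using hw.length_eq
    exact ⟨l △ r, by rw [treeWord, ← hr_nodes, ← hl_nodes, hr, hl, hn]⟩

/-! ### Tree statistics -/

/-- The sum of `c` over the left subtrees of all nodes of a tree. When `c` counts the occurrences
of a pattern `τ` in the permutation encoded by a tree, `leftSum c` counts those of `τ ⊕ 1`. -/
def leftSum (c : BinaryTree Unit → ℕ) : BinaryTree Unit → ℕ
  | .nil => 0
  | .node _ l r => leftSum c l + c l + leftSum c r

lemma leftSum_node (c : BinaryTree Unit → ℕ) (l r : BinaryTree Unit) :
    leftSum c (l △ r) = leftSum c l + c l + leftSum c r := rfl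

lemma leftSum_one : leftSum 1 = numNodes := by
  funext t
  induction t using unitRecOn with
  | base => rfl
  | ind l r hl hr =>
    simp only [leftSum_node, hl, hr, Pi.one_apply, numNodes]
    omega

lemma le_leftSum_of_leftSum_ne_zero {c d : BinaryTree Unit → ℕ} {N : ℕ}
    (h : ∀ t, d t ≠ 0 → N ≤ c t) (t : BinaryTree Unit) (ht : leftSum d t ≠ 0) :
    N ≤ leftSum c t := by
  induction t using unitRecOn with
  | base => exact absurd rfl ht
  | ind l r hl hr =>
    have hroot := h l
    simp only [leftSum_node] at ht ⊢
    omega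

/-- The number of inversions of the permutation encoded by a tree. -/
def invCount : BinaryTree Unit → ℕ
  | .nil => 0
  | .node _ l r => invCount l + invCount r + (l.numNodes + 1) * r.numNodes

lemma invCount_node (l r : BinaryTree Unit) :
    invCount (l △ r) = invCount l + invCount r + (l.numNodes + 1) * r.numNodes := rfl

/-- The number of occurrences of `12⋯(k+2)` in the permutation encoded by a tree. -/
def incCount : ℕ → BinaryTree Unit → ℕ
  | 0 => leftSum numNodes
  | k + 1 => leftSum (incCount k)

/-- The number of occurrences of `213⋯(k+2)` in the permutation encoded by a tree. -/
def swapCount : ℕ → BinaryTree Unit → ℕ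
  | 0 => invCount
  | k + 1 => leftSum (swapCount k)

lemma add_choose_two (a b : ℕ) : (a + b).choose 2 = a.choose 2 + b.choose 2 + a * b := by
  induction b with
  | zero => simp
  | succ b ih =>
    rw [← add_assoc, Nat.choose_succ_succ', Nat.choose_succ_succ' b, ih, Nat.choose_one_right,
      Nat.choose_one_right]
    ring

lemma incCount_zero_add_invCount (t : BinaryTree Unit) :
    incCount 0 t + invCount t = t.numNodes.choose 2 := by
  induction t using unitRecOn with
  | base => rfl
  | ind l r hl hr =>
    simp only [incCount, leftSum_node, invCount_node, numNodes, add_choose_two,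
      Nat.choose_succ_self] at hl hr ⊢
    linarith

lemma two_le_numNodes_of_incCount_zero_ne_zero (t : BinaryTree Unit) (h : incCount 0 t ≠ 0) :
    2 ≤ t.numNodes := by
  by_contra! hlt
  have hpairs := incCount_zero_add_invCount t
  rw [Nat.choose_eq_zero_of_lt hlt] at hpairs
  exact h (Nat.add_eq_zero_iff.1 hpairs).1

lemma two_le_incCount_of_incCount_succ_ne_zero (k : ℕ) (t : BinaryTree Unit)
    (h : incCount (k + 1) t ≠ 0) : 2 ≤ incCount k t := by
  induction k generalizing t with
  | zero => exact le_leftSum_of_leftSum_ne_zero two_le_numNodes_of_incCount_zero_ne_zero t h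
  | succ k ih => exact le_leftSum_of_leftSum_ne_zero ih t h

lemma one_le_invCount_of_leftSum_invCount_ne_zero (t : BinaryTree Unit)
    (h : leftSum invCount t ≠ 0) : 1 ≤ invCount t := by
  induction t using unitRecOn with
  | base => exact absurd rfl h
  | ind l r hl hr =>
    simp only [leftSum_node, invCount_node] at h ⊢
    omega

lemma one_le_swapCount_of_swapCount_succ_ne_zero (k : ℕ) (t : BinaryTree Unit)
    (h : swapCount (k + 1) t ≠ 0) : 1 ≤ swapCount k t := by
  induction k generalizing t with
  | zero => exact one_le_invCount_of_leftSum_invCount_ne_zero t h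
  | succ k ih => exact le_leftSum_of_leftSum_ne_zero ih t h

lemma one_le_numNodes_of_invCount_ne_zero (t : BinaryTree Unit) (h : invCount t ≠ 0) :
    1 ≤ t.numNodes := by
  cases t with
  | nil => exact absurd rfl h
  | node _ l r => exact Nat.le_add_left 1 _

lemma one_le_incCount_of_swapCount_succ_ne_zero (k : ℕ) (t : BinaryTree Unit)
    (h : swapCount (k + 1) t ≠ 0) : 1 ≤ incCount k t := by
  induction k generalizing t with
  | zero => exact le_leftSum_of_leftSum_ne_zero one_le_numNodes_of_invCount_ne_zero t h
  | succ k ih => exact le_leftSum_of_leftSum_ne_zero ih t h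

lemma card_occurrences_addMax_treeWord {k : ℕ} {τ : Equiv.Perm (Fin k)} {c : BinaryTree Unit → ℕ}
    (hc : ∀ t o, (occurrences τ (treeWord t o)).card = c t) (t : BinaryTree Unit) (o : ℕ) :
    (occurrences (addMax τ) (treeWord t o)).card = leftSum c t := by
  induction t using unitRecOn generalizing o with
  | base =>
    rw [treeWord, leftSum, Finset.card_eq_zero, Finset.eq_empty_iff_forall_notMem]
    intro s hs
    obtain ⟨hsub, hτ⟩ := mem_occurrences.1 hs
    obtain ⟨r, z, rfl, -⟩ := hasShape_addMax.1 hτ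
    simp at hsub
  | ind l r hl hr =>
    rw [treeWord, card_occurrences_addMax_append_cons, hl, hc, hr, leftSum_node]
    all_goals
      simp only [mem_treeWord]
      intros
      omega

lemma card_occurrences_one_treeWord (k : ℕ) (t : BinaryTree Unit) (o : ℕ) :
    (occurrences (1 : Equiv.Perm (Fin (k + 2))) (treeWord t o)).card = incCount k t := by
  induction k generalizing t o with
  | zero =>
    have hletters (t : BinaryTree Unit) (o : ℕ) :
        (occurrences (1 : Equiv.Perm (Fin 1)) (treeWord t o)).card = t.numNodes := by
      rw [← leftSum_one, ← addMax_one]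
      exact card_occurrences_addMax_treeWord (fun t o => card_occurrences_one_zero _) t o
    rw [← addMax_one]
    exact card_occurrences_addMax_treeWord hletters t o
  | succ k ih =>
    rw [← addMax_one]
    exact card_occurrences_addMax_treeWord ih t o

lemma card_occurrences_swap_treeWord (k : ℕ) (t : BinaryTree Unit) (o : ℕ) :
    (occurrences (Equiv.swap (0 : Fin (k + 2)) 1) (treeWord t o)).card = swapCount k t := by
  induction k generalizing t o with
  | zero =>
    have hpairs := card_occurrences_one_add_card_occurrences_swap (nodup_treeWord t o)
    rw [card_occurrences_one_treeWord, length_treeWord, ← incCount_zero_add_invCount] at hpairs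
    exact Nat.add_left_cancel hpairs
  | succ k ih =>
    rw [← addMax_swap_zero_one]
    exact card_occurrences_addMax_treeWord ih t o

/-! ### Trees avoiding both patterns, or containing one of them once -/

/-- The trees encoding permutations that avoid both `12⋯(k+2)` and `213⋯(k+2)`. -/
def avoidingTrees (k : ℕ) : Set (BinaryTree Unit) :=
  {t | incCount k t = 0 ∧ swapCount k t = 0}

/-- The trees encoding permutations that avoid `12⋯(k+2)` and contain `213⋯(k+2)` once. -/
def swapOnceTrees (k : ℕ) : Set (BinaryTree Unit) :=
  {t | incCount k t = 0 ∧ swapCount k t = 1}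

/-- The trees encoding permutations that avoid `213⋯(k+2)` and contain `12⋯(k+2)` once. -/
def incOnceTrees (k : ℕ) : Set (BinaryTree Unit) :=
  {t | swapCount k t = 0 ∧ incCount k t = 1}

lemma disjoint_avoidingTrees_swapOnceTrees (k : ℕ) :
    Disjoint (avoidingTrees k) (swapOnceTrees k) :=
  Set.disjoint_left.2 fun _ h h' => zero_ne_one (h.2.symm.trans h'.2)

lemma disjoint_avoidingTrees_incOnceTrees (k : ℕ) :
    Disjoint (avoidingTrees k) (incOnceTrees k) :=
  Set.disjoint_left.2 fun _ h h' => zero_ne_one (h.1.symm.trans h'.2)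

lemma numNodes_eq_zero_iff {α : Type*} {t : BinaryTree α} : t.numNodes = 0 ↔ t = .nil := by
  cases t <;> simp [numNodes]

lemma numNodes_eq_one_iff {t : BinaryTree Unit} : t.numNodes = 1 ↔ t = .nil △ .nil := by
  cases t with
  | nil => simp [numNodes]
  | node _ l r => simp [numNodes, numNodes_eq_zero_iff]

lemma numNodes_eq_two_iff {t : BinaryTree Unit} :
    t.numNodes = 2 ↔ t = .nil △ .nil △ .nil ∨ t = (.nil △ .nil) △ .nil := by
  cases t with
  | nil => simp [numNodes]
  | node _ l r =>
    simp only [numNodes, node.injEq, true_and, ← numNodes_eq_zero_iff, ← numNodes_eq_one_iff]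
    omega

lemma avoidingTrees_zero : avoidingTrees 0 = {.nil} ∪ {.nil △ .nil} := by
  ext t
  rw [Set.mem_union, Set.mem_singleton_iff, Set.mem_singleton_iff]
  constructor
  · rintro ⟨hinc : incCount 0 t = 0, hinv : invCount t = 0⟩
    have hpairs := incCount_zero_add_invCount t
    rw [hinc, hinv, eq_comm, Nat.choose_eq_zero_iff] at hpairs
    rw [← numNodes_eq_zero_iff, ← numNodes_eq_one_iff]
    omega
  · rintro (rfl | rfl) <;> exact ⟨rfl, rfl⟩

lemma eq_or_eq_of_incCount_zero_add_invCount_eq_one {t : BinaryTree Unit}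
    (h : incCount 0 t + invCount t = 1) :
    t = .nil △ .nil △ .nil ∨ t = (.nil △ .nil) △ .nil := by
  rw [incCount_zero_add_invCount, Nat.choose_eq_one_iff] at h
  exact numNodes_eq_two_iff.1 (h.resolve_left two_ne_zero)

lemma swapOnceTrees_zero : swapOnceTrees 0 = {.nil △ .nil △ .nil} := by
  ext t
  rw [Set.mem_singleton_iff]
  constructor
  · rintro ⟨hinc : incCount 0 t = 0, hinv : invCount t = 1⟩
    obtain rfl | rfl := eq_or_eq_of_incCount_zero_add_invCount_eq_one (t := t) (by omega)
    · rfl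
    · exact absurd hinc one_ne_zero
  · rintro rfl
    exact ⟨rfl, rfl⟩

lemma incOnceTrees_zero : incOnceTrees 0 = {(.nil △ .nil) △ .nil} := by
  ext t
  rw [Set.mem_singleton_iff]
  constructor
  · rintro ⟨hinv : invCount t = 0, hinc : incCount 0 t = 1⟩
    obtain rfl | rfl := eq_or_eq_of_incCount_zero_add_invCount_eq_one (t := t) (by omega)
    · exact absurd hinv one_ne_zero
    · rfl
  · rintro rfl
    exact ⟨rfl, rfl⟩

lemma node_mem_image2_node {S T : Set (BinaryTree Unit)} {l r : BinaryTree Unit} :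
    l △ r ∈ Set.image2 (· △ ·) S T ↔ l ∈ S ∧ r ∈ T :=
  Set.mem_image2_iff fun _ _ _ _ h => ⟨(node.inj h).2.1, (node.inj h).2.2⟩

lemma nil_notMem_image2_node {S T : Set (BinaryTree Unit)} :
    .nil ∉ Set.image2 (· △ ·) S T := by
  rintro ⟨l, -, r, -, h⟩
  cases h

lemma disjoint_image2_node_of_disjoint_left {S S' T T' : Set (BinaryTree Unit)}
    (h : Disjoint S S') : Disjoint (Set.image2 (· △ ·) S T) (Set.image2 (· △ ·) S' T') := by
  rw [Set.disjoint_left]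
  rintro _ ⟨l, hl, r, -, rfl⟩ h'
  exact Set.disjoint_left.1 h hl (node_mem_image2_node.1 h').1

lemma avoidingTrees_succ (k : ℕ) :
    avoidingTrees (k + 1) =
      {.nil} ∪ Set.image2 (· △ ·) (avoidingTrees k) (avoidingTrees (k + 1)) := by
  ext t
  induction t using unitRecOn with
  | base => simp [avoidingTrees, incCount, swapCount, leftSum]
  | ind l r =>
    have hinc := two_le_incCount_of_incCount_succ_ne_zero k l
    have hswap := one_le_swapCount_of_swapCount_succ_ne_zero k l
    rw [Set.mem_union, node_mem_image2_node]
    simp only [avoidingTrees, Set.mem_ofPred_eq, Set.mem_singleton_iff, reduceCtorEq, false_or,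
      incCount, swapCount, leftSum_node] at hinc hswap ⊢
    omega

lemma swapOnceTrees_succ (k : ℕ) :
    swapOnceTrees (k + 1) =
      Set.image2 (· △ ·) (avoidingTrees k) (swapOnceTrees (k + 1)) ∪
        Set.image2 (· △ ·) (swapOnceTrees k) (avoidingTrees (k + 1)) := by
  ext t
  induction t using unitRecOn with
  | base => simp [swapOnceTrees, swapCount, leftSum]
  | ind l r =>
    have hinc := two_le_incCount_of_incCount_succ_ne_zero k l
    have hswap := one_le_swapCount_of_swapCount_succ_ne_zero k l
    have hincswap := one_le_incCount_of_swapCount_succ_ne_zero k l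
    rw [Set.mem_union, node_mem_image2_node, node_mem_image2_node]
    simp only [avoidingTrees, swapOnceTrees, Set.mem_ofPred_eq, incCount, swapCount,
      leftSum_node] at hinc hswap hincswap ⊢
    omega

lemma incOnceTrees_succ (k : ℕ) :
    incOnceTrees (k + 1) =
      Set.image2 (· △ ·) (avoidingTrees k) (incOnceTrees (k + 1)) ∪
        Set.image2 (· △ ·) (incOnceTrees k) (avoidingTrees (k + 1)) := by
  ext t
  induction t using unitRecOn with
  | base => simp [incOnceTrees, incCount, leftSum]
  | ind l r =>
    have hinc := two_le_incCount_of_incCount_succ_ne_zero k l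
    have hswap := one_le_swapCount_of_swapCount_succ_ne_zero k l
    rw [Set.mem_union, node_mem_image2_node, node_mem_image2_node]
    simp only [avoidingTrees, incOnceTrees, Set.mem_ofPred_eq, incCount, swapCount,
      leftSum_node] at hinc hswap ⊢
    omega

/-! ### Generating functions of sets of trees -/

open Classical in
/-- The ordinary generating function of a set of binary trees, by number of nodes. -/
noncomputable def treeGF (S : Set (BinaryTree Unit)) : ℚ⟦X⟧ :=
  PowerSeries.mk fun n => ({t ∈ treesOfNumNodesEq n | t ∈ S}.card : ℚ)

lemma treeGF_singleton (t : BinaryTree Unit) : treeGF {t} = X ^ t.numNodes := by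
  classical
  ext n
  simp only [treeGF, coeff_mk, coeff_X_pow, Set.mem_singleton_iff, Finset.filter_eq',
    mem_treesOfNumNodesEq, eq_comm (a := n)]
  split_ifs <;> simp

lemma treeGF_union {S T : Set (BinaryTree Unit)} (h : Disjoint S T) :
    treeGF (S ∪ T) = treeGF S + treeGF T := by
  classical
  ext n
  simp only [treeGF, map_add, coeff_mk, Set.mem_union, Finset.filter_or]
  rw [Finset.card_union_of_disjoint, Nat.cast_add]
  exact Finset.disjoint_filter.2 fun _ _ => (Set.disjoint_left.1 h ·)

lemma treeGF_image2_node (S T : Set (BinaryTree Unit)) :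
    treeGF (Set.image2 (· △ ·) S T) = X * (treeGF S * treeGF T) := by
  classical
  ext n
  cases n with
  | zero => simp [treeGF, Finset.filter_singleton]
  | succ n =>
    rw [coeff_succ_X_mul]
    simp only [treeGF, coeff_mul, coeff_mk, ← Nat.cast_mul, ← Nat.cast_sum,
      ← Finset.card_product, ← Finset.card_sigma]
    rw [Nat.cast_inj, eq_comm]
    refine Finset.card_nbij (fun p => p.2.1 △ p.2.2) ?_ ?_ ?_
    · rintro ⟨⟨i, j⟩, l, r⟩ h
      simp only [SetLike.mem_coe, Finset.mem_sigma, Finset.HasAntidiagonal.mem_antidiagonal,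
        Finset.mem_product, Finset.mem_filter, mem_treesOfNumNodesEq, node_mem_image2_node,
        numNodes] at h ⊢
      grind
    · rintro ⟨⟨i, j⟩, l, r⟩ h ⟨⟨i', j'⟩, l', r'⟩ h' hnode
      simp only [SetLike.mem_coe, Finset.mem_sigma, Finset.mem_product, Finset.mem_filter,
        mem_treesOfNumNodesEq] at h h'
      grind
    · rintro t h
      obtain ⟨ht, l, hl, r, hr, rfl⟩ := Finset.mem_filter.1 h
      refine ⟨⟨(l.numNodes, r.numNodes), l, r⟩, ?_, rfl⟩
      simpa [mem_treesOfNumNodesEq, hl, hr, numNodes] using ht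

/-! ### Solving the recurrences -/

/-- `denom k` is the series `q_k = p_k - X² p_{k-2}`, which satisfies the recurrence of the `p_k`.
At `k = 0` the recurrence extends `p` by `p_{-2} = -1/X`, whence `q_0 = 1 + X`. -/
noncomputable def denom : ℕ → ℚ⟦X⟧
  | 0 => 1 + X
  | k + 1 => (pU (k + 2) : ℚ⟦X⟧) - X ^ 2 * (pU k : ℚ⟦X⟧)

lemma denom_one : denom 1 = 1 := by simp [denom, pU]

lemma denom_add_two (k : ℕ) : denom (k + 2) = denom (k + 1) - X * denom k := by
  cases k <;> simp [denom, pU] <;> ring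

lemma treeGF_avoidingTrees_mul_denom (k : ℕ) :
    treeGF (avoidingTrees k) * denom (k + 1) = denom k := by
  induction k with
  | zero =>
    rw [avoidingTrees_zero, treeGF_union (by simp), treeGF_singleton, treeGF_singleton, denom_one]
    simp [numNodes, denom]
  | succ k ih =>
    have hrec : treeGF (avoidingTrees (k + 1)) =
        1 + X * (treeGF (avoidingTrees k) * treeGF (avoidingTrees (k + 1))) := by
      conv_lhs => rw [avoidingTrees_succ, treeGF_union
        (Set.disjoint_singleton_left.2 nil_notMem_image2_node), treeGF_singleton,
        treeGF_image2_node, numNodes, pow_zero]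
    rw [denom_add_two]
    linear_combination denom (k + 1) * hrec + X * treeGF (avoidingTrees (k + 1)) * ih

lemma treeGF_mul_denom_sq_of_recurrence {S : ℕ → Set (BinaryTree Unit)}
    (hdisj : ∀ k, Disjoint (avoidingTrees k) (S k)) (hzero : treeGF (S 0) = X ^ 2)
    (hsucc : ∀ k, S (k + 1) = Set.image2 (· △ ·) (avoidingTrees k) (S (k + 1)) ∪
      Set.image2 (· △ ·) (S k) (avoidingTrees (k + 1))) (k : ℕ) :
    treeGF (S k) * denom (k + 1) ^ 2 = X ^ (k + 2) := by
  induction k with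
  | zero => rw [hzero, denom_one, one_pow, mul_one]
  | succ k ih =>
    have hrec : treeGF (S (k + 1)) = X * (treeGF (avoidingTrees k) * treeGF (S (k + 1))) +
        X * (treeGF (S k) * treeGF (avoidingTrees (k + 1))) := by
      conv_lhs => rw [hsucc, treeGF_union (disjoint_image2_node_of_disjoint_left (hdisj k)),
        treeGF_image2_node, treeGF_image2_node]
    have havoid := treeGF_avoidingTrees_mul_denom k
    have havoid_succ := treeGF_avoidingTrees_mul_denom (k + 1)
    have hsolve : treeGF (S (k + 1)) * denom (k + 2) =
        X * treeGF (S k) * treeGF (avoidingTrees (k + 1)) * denom (k + 1) := by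
      rw [denom_add_two]
      linear_combination denom (k + 1) * hrec + X * treeGF (S (k + 1)) * havoid
    linear_combination denom (k + 2) * hsolve + X * treeGF (S k) * denom (k + 1) * havoid_succ
      + X * ih

lemma treeGF_swapOnceTrees_mul_denom_sq (k : ℕ) :
    treeGF (swapOnceTrees k) * denom (k + 1) ^ 2 = X ^ (k + 2) :=
  treeGF_mul_denom_sq_of_recurrence disjoint_avoidingTrees_swapOnceTrees
    (by rw [swapOnceTrees_zero, treeGF_singleton]; rfl) swapOnceTrees_succ k

lemma treeGF_incOnceTrees_mul_denom_sq (k : ℕ) :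
    treeGF (incOnceTrees k) * denom (k + 1) ^ 2 = X ^ (k + 2) :=
  treeGF_mul_denom_sq_of_recurrence disjoint_avoidingTrees_incOnceTrees
    (by rw [incOnceTrees_zero, treeGF_singleton]; rfl) incOnceTrees_succ k

/-! ### Permutations as words -/

lemma sublist_ofFn_iff {α : Type*} {k n : ℕ} {h : Fin n → α} {s : List α} (hs : s.length = k) :
    s <+ List.ofFn h ↔ ∃ f : Fin k → Fin n, StrictMono f ∧ s = List.ofFn (h ∘ f) := by
  subst hs
  have hlen : (List.ofFn h).length = n := List.length_ofFn
  rw [List.sublist_iff_exists_fin_orderEmbedding_get_eq]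
  constructor
  · rintro ⟨f, hf⟩
    refine ⟨Fin.cast hlen ∘ f, fun i j hij => f.strictMono hij, ?_⟩
    refine List.ext_get (by simp) fun i hi _ => (hf ⟨i, hi⟩).trans ?_
    rw [List.get_ofFn, List.get_ofFn]
    rfl
  · rintro ⟨f, hf, hsf⟩
    refine ⟨OrderEmbedding.ofStrictMono (Fin.cast hlen.symm ∘ f) fun i j hij => hf hij, fun i => ?_⟩
    rw [List.get_of_eq hsf, List.get_ofFn, List.get_ofFn]
    rfl

section PermWord

variable {k n : ℕ} {τ : Equiv.Perm (Fin k)}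

/-- The one-line notation of a permutation, with letters `0, …, n - 1`. -/
def permWord (π : Equiv.Perm (Fin n)) : List ℕ :=
  List.ofFn fun i => (π i : ℕ)

lemma permWord_injective : Function.Injective (permWord (n := n)) := fun _ _ h =>
  Equiv.ext fun i => Fin.ext (congrFun (List.ofFn_injective h) i)

lemma nodup_permWord (π : Equiv.Perm (Fin n)) : (permWord π).Nodup :=
  List.nodup_ofFn.2 (Fin.val_injective.comp π.injective)

lemma permWord_perm_range' (π : Equiv.Perm (Fin n)) : permWord π ~ List.range' 0 n := by
  rw [List.perm_ext_iff_of_nodup (nodup_permWord π) List.nodup_range']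
  intro x
  rw [permWord, List.mem_ofFn, List.mem_range'_1, zero_add]
  exact ⟨fun ⟨i, hi⟩ => hi ▸ ⟨Nat.zero_le _, (π i).2⟩, fun hx => ⟨π.symm ⟨x, hx.2⟩, by simp⟩⟩

lemma exists_permWord_eq {w : List ℕ} (hw : w ~ List.range' 0 n) :
    ∃ π : Equiv.Perm (Fin n), permWord π = w := by
  obtain rfl : w.length = n := by simpa using hw.length_eq
  have hlt (i : Fin w.length) : w.get i < w.length := by
    simpa using hw.subset (List.get_mem w i)
  have hinj : Function.Injective fun i => (⟨w.get i, hlt i⟩ : Fin w.length) := fun i j hij =>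
    List.nodup_iff_injective_get.1 (hw.nodup_iff.2 List.nodup_range') (Fin.mk.inj_iff.1 hij)
  exact ⟨Equiv.ofBijective _ (Finite.injective_iff_bijective.1 hinj), List.ofFn_get w⟩

lemma card_occurrences_permWord (τ : Equiv.Perm (Fin k)) (π : Equiv.Perm (Fin n)) :
    (occurrences τ (permWord π)).card = {f | IsOccurrence τ π f}.ncard := by
  have hinj : Function.Injective fun f : Fin k → Fin n => List.ofFn fun i => (π (f i) : ℕ) :=
    fun f g hfg => funext fun i =>
      π.injective (Fin.ext (congrFun (List.ofFn_injective hfg) i))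
  rw [← Set.ncard_coe_finset, ← Set.ncard_image_of_injective _ hinj]
  congr 1
  ext s
  rw [SetLike.mem_coe, mem_occurrences, Set.mem_image]
  constructor
  · rintro ⟨hsub, hτ⟩
    obtain ⟨f, hf, rfl⟩ := (sublist_ofFn_iff hτ.length_eq).1 hsub
    exact ⟨f, ⟨hf, (hasShape_ofFn (α := ℕ)).1 hτ⟩, rfl⟩
  · rintro ⟨f, ⟨hf, hτ⟩, rfl⟩
    exact ⟨(sublist_ofFn_iff List.length_ofFn).2 ⟨f, hf, rfl⟩, (hasShape_ofFn (α := ℕ)).2 hτ⟩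

lemma not_contains_iff {π : Equiv.Perm (Fin n)} :
    ¬ Contains τ π ↔ (occurrences τ (permWord π)).card = 0 := by
  rw [card_occurrences_permWord, Set.ncard_eq_zero, Set.eq_empty_iff_forall_notMem]
  exact not_exists

lemma containsOnce_iff {π : Equiv.Perm (Fin n)} :
    ContainsOnce τ π ↔ (occurrences τ (permWord π)).card = 1 := by
  rw [card_occurrences_permWord, Set.ncard_eq_one, Set.singleton_iff_unique_mem]
  rfl

lemma hasShape_p132 {α : Type*} [LinearOrder α] {x y z : α} :
    HasShape p132 [x, y, z] ↔ x < z ∧ z < y := by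
  have hofFn : [x, y, z] = List.ofFn ![x, y, z] := by simp
  have h0 : p132 0 = 0 := rfl
  have h1 : p132 1 = 2 := rfl
  have h2 : p132 2 = 1 := rfl
  rw [hofFn, hasShape_ofFn]
  constructor
  · intro h
    exact ⟨(h 0 2).1 (by rw [h0, h2]; decide), (h 2 1).1 (by rw [h1, h2]; decide)⟩
  · rintro ⟨hxz, hzy⟩
    simp [Fin.forall_fin_succ, h0, h1, h2, hxz, hzy, hxz.trans hzy, hxz.le, hzy.le,
      (hxz.trans hzy).le]

lemma not_contains_p132_iff {π : Equiv.Perm (Fin n)} :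
    ¬ Contains p132 π ↔ Avoids132 (permWord π) := by
  rw [not_contains_iff, Finset.card_eq_zero, Finset.eq_empty_iff_forall_notMem]
  constructor
  · intro h x y z hsub hxz
    by_contra! hzy
    exact h [x, y, z] (mem_occurrences.2 ⟨hsub, hasShape_p132.2 ⟨hxz, hzy⟩⟩)
  · intro h s hs
    obtain ⟨hsub, hshape⟩ := mem_occurrences.1 hs
    obtain ⟨x, y, z, rfl⟩ := List.length_eq_three.1 hshape.length_eq
    obtain ⟨hxz, hzy⟩ := hasShape_p132.1 hshape
    exact hzy.not_ge (h x y z hsub hxz)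

end PermWord

lemma mk_card_avoiding_p132_eq_treeGF {S : Set (BinaryTree Unit)}
    {Q : ∀ {n : ℕ}, Equiv.Perm (Fin n) → Prop}
    (hQ : ∀ (n : ℕ) (π : Equiv.Perm (Fin n)) t, permWord π = treeWord t 0 → (Q π ↔ t ∈ S)) :
    (PowerSeries.mk fun n =>
      (Nat.card {π : Equiv.Perm (Fin n) // ¬ Contains p132 π ∧ Q π} : ℚ)) = treeGF S := by
  classical
  ext n
  have himage : permWord '' {π : Equiv.Perm (Fin n) | ¬ Contains p132 π ∧ Q π} =
      (treeWord · 0) '' {t | t ∈ treesOfNumNodesEq n ∧ t ∈ S} := by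
    ext w
    constructor
    · rintro ⟨π, ⟨h132, hπ⟩, rfl⟩
      have hperm := permWord_perm_range' π
      obtain ⟨t, ht⟩ := exists_treeWord_eq hperm (not_contains_p132_iff.1 h132)
      refine ⟨t, ⟨?_, (hQ n π t ht.symm).1 hπ⟩, ht⟩
      rw [mem_treesOfNumNodesEq, ← length_treeWord t 0, ht, hperm.length_eq, List.length_range']
    · rintro ⟨t, ⟨ht, htS⟩, rfl⟩
      have hperm := treeWord_perm_range' t 0
      rw [mem_treesOfNumNodesEq.1 ht] at hperm
      obtain ⟨π, hπ⟩ := exists_permWord_eq hperm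
      refine ⟨π, ⟨?_, (hQ n π t hπ).2 htS⟩, hπ⟩
      rw [not_contains_p132_iff, hπ]
      exact avoids132_treeWord t 0
  have hcard := congrArg Set.ncard himage
  rw [Set.ncard_image_of_injective _ permWord_injective,
    Set.ncard_image_of_injective _ (treeWord_injective 0), ← Finset.coe_filter,
    Set.ncard_coe_finset] at hcard
  rw [treeGF, coeff_mk, coeff_mk, ← hcard]
  rfl

/-- Write `k = m + 3 ≥ 3`. Let `12⋯k` be the identity of `S_k` and
`213⋯k = swap 0 1` (zero-indexed). With `q_{k−1} = p_{k−1} − X²·p_{k−3}` (and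
`pU (m+1) = p_m`), the generating functions `F₁` (avoid `132` and `12⋯k`, contain
`213⋯k` exactly once) and `F₂` (avoid `132` and `213⋯k`, contain `12⋯k` exactly once)
satisfy `F₁·q_{k−1}² = X^k` and `F₂·q_{k−1}² = X^k`. -/
theorem stmt16 (m : ℕ) :
    (PowerSeries.mk fun n => ((Nat.card {π : Equiv.Perm (Fin n) //
        ¬ Contains p132 π ∧ ¬ Contains (1 : Equiv.Perm (Fin (m + 3))) π ∧
          ContainsOnce (Equiv.swap (0 : Fin (m + 3)) 1) π} : ℕ) : ℚ))
      * ((pU (m + 3) : PowerSeries ℚ)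
          - PowerSeries.X ^ 2 * (pU (m + 1) : PowerSeries ℚ)) ^ 2
      = PowerSeries.X ^ (m + 3)
    ∧
    (PowerSeries.mk fun n => ((Nat.card {π : Equiv.Perm (Fin n) //
        ¬ Contains p132 π ∧ ¬ Contains (Equiv.swap (0 : Fin (m + 3)) 1) π ∧
          ContainsOnce (1 : Equiv.Perm (Fin (m + 3))) π} : ℕ) : ℚ))
      * ((pU (m + 3) : PowerSeries ℚ)
          - PowerSeries.X ^ 2 * (pU (m + 1) : PowerSeries ℚ)) ^ 2
      = PowerSeries.X ^ (m + 3) := by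
  constructor
  · rw [mk_card_avoiding_p132_eq_treeGF (S := swapOnceTrees (m + 1))]
    · exact treeGF_swapOnceTrees_mul_denom_sq (m + 1)
    · intro n π t ht
      rw [not_contains_iff, containsOnce_iff, ht, card_occurrences_one_treeWord,
        card_occurrences_swap_treeWord]
      rfl
  · rw [mk_card_avoiding_p132_eq_treeGF (S := incOnceTrees (m + 1))]
    · exact treeGF_incOnceTrees_mul_denom_sq (m + 1)
    · intro n π t ht
      rw [not_contains_iff, containsOnce_iff, ht, card_occurrences_swap_treeWord,
        card_occurrences_one_treeWord]
      rfl
end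

section
/- Let k ≥ 3 and let F(X) = Σ_{n≥0} |{π ∈ S_n : π avoids all three patterns 132, 12⋯k and 213⋯k}|·Xⁿ ∈ ℚ⟦X⟧. Set q_m = p_m − X²·p_{m−2}. Then F(X)·q_{k−1}(X) = q_{k−2}(X). (Equivalently, F(x) = (U_{k−2}(1/(2√x)) − x·U_{k−4}(1/(2√x))) / (√x·(U_{k−1}(1/(2√x)) − x·U_{k−3}(1/(2√x)))).) -/
/-!
Read permutations as words. A `132`-avoiding word with largest letter `M` has the form `L M R`,
where every letter of `L` exceeds every letter of `R`. If the forbidden words are those of a class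
`P` followed by one new largest letter, then `L M R` is allowed exactly when `L` avoids `P` and `R`
is itself allowed, so the generating function `G` satisfies `G = 1 + X F G`, where `F` is the one
for `P`. The patterns `12⋯k` and `213⋯k` arise from `{12, 21}` by adding a largest letter `k - 2`
times; unfolding from `1 + X` gives a continued fraction whose convergents are governed by the
Chebyshev recurrence.
-/

namespace PatternWord

open List
open scoped PowerSeries

section Words

variable {α : Type*}

/-- The word `w` has no subword (subsequence) in the class `P`. A set of patterns is encoded as the
class of all words order-isomorphic to one of them. -/
def Avoids (P : List α → Prop) (w : List α) : Prop :=
  ∀ v, v <+ w → ¬ P v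

theorem Avoids.sublist {P : List α → Prop} {v w : List α} (hw : Avoids P w) (hvw : v <+ w) :
    Avoids P v :=
  fun _ hu => hw _ (hu.trans hvw)

theorem avoids_length_eq_iff {k : ℕ} {w : List α} :
    Avoids (fun v => v.length = k) w ↔ w.length < k := by
  refine ⟨fun hw => ?_, fun hw v hv => (hv.length_le.trans_lt hw).ne⟩
  by_contra! hk
  exact hw _ (take_sublist k w) (length_take_of_le hk)

theorem avoids_ofFn_iff {P : List α → Prop} {k n : ℕ} (hP : ∀ v, P v → v.length = k)
    (g : Fin n → α) :
    Avoids P (ofFn g) ↔ ∀ f : Fin k → Fin n, StrictMono f → ¬ P (ofFn (g ∘ f)) := by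
  constructor
  · intro h f hf
    refine h _ (sublist_iff_exists_fin_orderEmbedding_get_eq.2 ⟨OrderEmbedding.ofStrictMono
      (fun i => (f (i.cast length_ofFn)).cast length_ofFn.symm) fun i j hij => hf hij, ?_⟩)
    exact fun i => by simp [Fin.cast]
  · intro h v hv hPv
    obtain rfl := hP v hPv
    obtain ⟨f, hf⟩ := sublist_iff_exists_fin_orderEmbedding_get_eq.1 hv
    refine h (fun i => (f i).cast length_ofFn) (fun i j hij => f.strictMono hij) ?_
    convert hPv
    refine ext_get (by simp) fun i _ hi => ?_
    simpa using! (hf ⟨i, hi⟩).symm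

/-- The words obtained from a word of `P` by appending one letter larger than all others. On
patterns this is the passage from `τ ∈ S_k` to `τ(1) ⋯ τ(k) (k+1)`. -/
def Capped [LT α] (P : List α → Prop) (v : List α) : Prop :=
  ∃ u z, v = u ++ [z] ∧ P u ∧ ∀ x ∈ u, x < z

theorem capped_ofFn_succ [LT α] {P : List α → Prop} {n : ℕ} (g : Fin (n + 1) → α) :
    Capped P (ofFn g) ↔
      P (ofFn fun i : Fin n => g i.castSucc) ∧ ∀ i : Fin n, g i.castSucc < g (Fin.last n) := by
  simp only [Capped, ofFn_succ', concat_eq_append]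
  constructor
  · rintro ⟨u, z, hv, hPu, hlt⟩
    obtain ⟨rfl, hz⟩ := append_inj' hv rfl
    obtain rfl := singleton_inj.1 hz
    exact ⟨hPu, by simpa [mem_ofFn] using hlt⟩
  · rintro ⟨hPu, hlt⟩
    exact ⟨_, _, rfl, hPu, by simpa [mem_ofFn] using hlt⟩

theorem avoids_capped_nil [LT α] (P : List α → Prop) : Avoids (Capped P) [] := by
  rintro v hv ⟨u, z, rfl, -⟩
  simp at hv

theorem avoids_left_of_avoids_capped [LT α] {P : List α → Prop} {L R : List α} {M : α}
    (hL : ∀ x ∈ L, x < M) (h : Avoids (Capped P) (L ++ M :: R)) : Avoids P L :=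
  fun u hu hPu => h (u ++ [M]) (hu.append (by simp))
    ⟨u, M, rfl, hPu, fun x hx => hL x (hu.subset hx)⟩

/-- The word `w` avoids the pattern `132`. -/
def Avoids132 [LT α] (w : List α) : Prop :=
  w.Triplewise fun x y z => ¬ (x < z ∧ z < y)

theorem avoids132_ofFn_iff [LT α] {n : ℕ} (g : Fin n → α) :
    Avoids132 (ofFn g) ↔ ∀ i j k, i < j → j < k → ¬ (g i < g k ∧ g k < g j) := by
  simp only [Avoids132, triplewise_iff_getElem, length_ofFn, List.getElem_ofFn]
  exact ⟨fun h i j k hij hjk => h i j k hij hjk k.2,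
    fun h i j k hij hjk hk => h ⟨i, by lia⟩ ⟨j, by lia⟩ ⟨k, hk⟩ hij hjk⟩

variable [LinearOrder α] {P : List α → Prop} {L R : List α} {M : α}

theorem avoids_capped_append_cons (hR : ∀ z ∈ R, z < M) (hLR : ∀ x ∈ L, ∀ z ∈ R, z ≤ x)
    (hPL : Avoids P L) (hPR : Avoids (Capped P) R) : Avoids (Capped P) (L ++ M :: R) := by
  rintro v hv ⟨u, z, rfl, hPu, hlt⟩
  obtain ⟨w₁, w₂, hw, hu, hz⟩ := append_sublist_iff.1 hv
  have hz : z ∈ w₂ := singleton_sublist.1 hz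
  obtain ⟨t, rfl, -⟩ | ⟨t, rfl, ht⟩ := append_eq_append_iff.1 hw.symm
  · exact hPL u (hu.trans (sublist_append_left _ _)) hPu
  obtain ⟨rfl, -⟩ | ⟨t, rfl, rfl⟩ := cons_eq_append_iff.1 ht
  · exact hPL u (by simpa using hu) hPu
  have hzR : z ∈ t ++ w₂ := mem_append_right t hz
  -- The letters of `u` lie below `z`, hence below `M` and all of `L`.
  have hut : u <+ t := by
    have hu' := hu.filter (fun x => decide (x < z))
    rw [filter_eq_self.2 (by simpa using hlt), filter_append,
      filter_eq_nil_iff.2 (by simpa using fun x hx => hLR x hx z hzR),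
      filter_cons_of_neg (by simpa using (hR z hzR).le)] at hu'
    exact hu'.trans filter_sublist
  exact hPR _ (hut.append (singleton_sublist.2 hz)) ⟨u, z, rfl, hPu, hlt⟩

theorem avoids_capped_append_cons_iff (hL : ∀ x ∈ L, x < M) (hR : ∀ z ∈ R, z < M)
    (hLR : ∀ x ∈ L, ∀ z ∈ R, z ≤ x) :
    Avoids (Capped P) (L ++ M :: R) ↔ Avoids P L ∧ Avoids (Capped P) R :=
  ⟨fun h => ⟨avoids_left_of_avoids_capped hL h,
    h.sublist ((sublist_cons_self _ _).trans (sublist_append_right _ _))⟩,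
    fun h => avoids_capped_append_cons hR hLR h.1 h.2⟩

theorem avoids132_append_cons_iff (hL : ∀ x ∈ L, x < M) (hR : ∀ z ∈ R, z < M) :
    Avoids132 (L ++ M :: R) ↔ Avoids132 L ∧ Avoids132 R ∧ ∀ x ∈ L, ∀ z ∈ R, z ≤ x := by
  unfold Avoids132
  simp only [triplewise_append, triplewise_cons, pairwise_cons, mem_cons]
  constructor
  · rintro ⟨hL', ⟨-, hR'⟩, hLMR, -⟩
    exact ⟨hL', hR', fun x hx z hz => not_lt.1 fun hxz => (hLMR x hx).1 z hz ⟨hxz, hR z hz⟩⟩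
  · rintro ⟨hL', hR', hLR⟩
    refine ⟨hL', ⟨?_, hR'⟩, ?_, ?_⟩
    · exact pairwise_of_forall_mem_list fun y _ z hz h => (h.1.trans (hR z hz)).false
    · exact fun x hx => ⟨fun z hz h => (hLR x hx z hz).not_gt h.1,
        pairwise_of_forall_mem_list fun y _ z hz h => (hLR x hx z hz).not_gt h.1⟩
    · rintro z (rfl | hz)
      · exact pairwise_of_forall_mem_list fun x _ y hy h => (h.2.trans (hL y hy)).false
      · exact pairwise_of_forall_mem_list fun x hx y _ h => (hLR x hx z hz).not_gt h.1

end Words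

section Intervals

variable {a n : ℕ} {L R w : List ℕ}

theorem append_cons_perm_range'_succ_iff :
    L ++ (a + n) :: R ~ range' a (n + 1) ↔ L ++ R ~ range' a n := by
  rw [range'_concat, one_mul, perm_middle.congr_left, (perm_append_singleton _ _).congr_right,
    perm_cons]

theorem le_and_lt_of_mem_of_perm_range' (hw : w ~ range' a n) {x : ℕ} (hx : x ∈ w) :
    a ≤ x ∧ x < a + n := by
  simpa using hw.subset hx

theorem perm_range'_of_append_perm_range' (h : L ++ R ~ range' a n)
    (hLR : ∀ x ∈ L, ∀ z ∈ R, z ≤ x) :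
    L ~ range' (a + R.length) L.length ∧ R ~ range' a R.length := by
  let sL := L.insertionSort (· ≤ ·)
  let sR := R.insertionSort (· ≤ ·)
  have hsL : sL ~ L := perm_insertionSort _ _
  have hsR : sR ~ R := perm_insertionSort _ _
  have hlen : n = R.length + L.length := by simpa [add_comm] using h.length_eq.symm
  have hsorted : (sR ++ sL).Pairwise (· ≤ ·) :=
    pairwise_append.2 ⟨pairwise_insertionSort _ _, pairwise_insertionSort _ _,
      fun z hz x hx => hLR x (hsL.subset hx) z (hsR.subset hz)⟩
  have heq : sR ++ sL = range' a n :=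
    Perm.eq_of_pairwise' hsorted ((pairwise_lt_range' ..).imp le_of_lt)
      (((hsR.append hsL).trans perm_append_comm).trans h)
  rw [hlen, ← range'_append_1] at heq
  obtain ⟨hR, hL⟩ := append_inj heq (by simpa using hsR.length_eq)
  exact ⟨hL ▸ hsL.symm, hR ▸ hsR.symm⟩

end Intervals

section Counting

variable {P : List ℕ → Prop} {a n : ℕ} {w : List ℕ}

open Classical in
/-- The arrangements of the letters `a, a + 1, …, a + n - 1` that avoid `132` and `P`. The offset
`a` is there because the left part of a word in the decomposition at the maximum does not use an
initial segment of letters. -/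
noncomputable def avoiders (P : List ℕ → Prop) (a n : ℕ) : Finset (List ℕ) :=
  {w ∈ (range' a n).permutations.toFinset | Avoids132 w ∧ Avoids P w}

theorem mem_avoiders : w ∈ avoiders P a n ↔ w ~ range' a n ∧ Avoids132 w ∧ Avoids P w := by
  simp [avoiders]

theorem append_cons_mem_avoiders_capped_iff {L R : List ℕ} :
    L ++ (a + n) :: R ∈ avoiders (Capped P) a (n + 1) ↔
      L.length + R.length = n ∧ L ∈ avoiders P (a + R.length) L.length ∧
        R ∈ avoiders (Capped P) a R.length := by
  simp only [mem_avoiders, append_cons_perm_range'_succ_iff]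
  constructor
  · rintro ⟨hperm, h132, hcap⟩
    have hlt : ∀ x ∈ L ++ R, x < a + n := fun x hx => (le_and_lt_of_mem_of_perm_range' hperm hx).2
    have hltL : ∀ x ∈ L, x < a + n := fun x hx => hlt x (mem_append_left R hx)
    have hltR : ∀ z ∈ R, z < a + n := fun z hz => hlt z (mem_append_right L hz)
    obtain ⟨hL132, hR132, hLR⟩ := (avoids132_append_cons_iff hltL hltR).1 h132
    obtain ⟨hLcap, hRcap⟩ := (avoids_capped_append_cons_iff hltL hltR hLR).1 hcap
    obtain ⟨hLperm, hRperm⟩ := perm_range'_of_append_perm_range' hperm hLR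
    exact ⟨by simpa using hperm.length_eq, ⟨hLperm, hL132, hLcap⟩, hRperm, hR132, hRcap⟩
  · rintro ⟨rfl, ⟨hLperm, hL132, hLcap⟩, hRperm, hR132, hRcap⟩
    have hltL : ∀ x ∈ L, x < a + (L.length + R.length) := fun x hx => by
      grind [le_and_lt_of_mem_of_perm_range' hLperm hx]
    have hltR : ∀ z ∈ R, z < a + (L.length + R.length) := fun z hz => by
      grind [le_and_lt_of_mem_of_perm_range' hRperm hz]
    have hLR : ∀ x ∈ L, ∀ z ∈ R, z ≤ x := fun x hx z hz => by
      grind [le_and_lt_of_mem_of_perm_range' hLperm hx, le_and_lt_of_mem_of_perm_range' hRperm hz]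
    refine ⟨?_, (avoids132_append_cons_iff hltL hltR).2 ⟨hL132, hR132, hLR⟩,
      (avoids_capped_append_cons_iff hltL hltR hLR).2 ⟨hLcap, hRcap⟩⟩
    rw [add_comm L.length, ← range'_append_1]
    exact (hLperm.append hRperm).trans perm_append_comm

theorem length_of_mem_avoiders (hw : w ∈ avoiders P a n) : w.length = n := by
  simpa using (mem_avoiders.1 hw).1.length_eq

theorem avoiders_capped_succ (P : List ℕ → Prop) (a n : ℕ) :
    avoiders (Capped P) a (n + 1) = (Finset.HasAntidiagonal.antidiagonal n).biUnion fun p =>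
      Finset.image₂ (fun L R => L ++ (a + n) :: R)
        (avoiders P (a + p.2) p.1) (avoiders (Capped P) a p.2) := by
  ext w
  simp only [Finset.mem_biUnion, Finset.mem_image₂, Finset.HasAntidiagonal.mem_antidiagonal]
  constructor
  · intro hw
    have hmax : a + n ∈ w := (mem_avoiders.1 hw).1.symm.subset (by simp)
    obtain ⟨L, R, rfl⟩ := append_of_mem hmax
    obtain ⟨hlen, hL, hR⟩ := append_cons_mem_avoiders_capped_iff.1 hw
    exact ⟨(L.length, R.length), hlen, L, hL, R, hR, rfl⟩
  · rintro ⟨⟨i, j⟩, hij, L, hL, R, hR, rfl⟩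
    obtain rfl := length_of_mem_avoiders hL
    obtain rfl := length_of_mem_avoiders hR
    exact append_cons_mem_avoiders_capped_iff.2 ⟨hij, hL, hR⟩

theorem notMem_of_mem_avoiders {x : ℕ} (hw : w ∈ avoiders P a n) (hx : a + n ≤ x) : x ∉ w :=
  fun hxw => ((le_and_lt_of_mem_of_perm_range' (mem_avoiders.1 hw).1 hxw).2.trans_le hx).false

theorem eq_and_eq_of_append_cons_eq {Q : List ℕ → Prop} {i j b : ℕ} {L L' R R' : List ℕ}
    (hL : L ∈ avoiders P (a + j) i) (hR : R ∈ avoiders Q a j) (hb : a + (i + j) ≤ b)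
    (h : L ++ b :: R = L' ++ b :: R') : L = L' ∧ R = R' := by
  have hbL : b ∉ L := notMem_of_mem_avoiders hL (by lia)
  have hbR : b ∉ R := notMem_of_mem_avoiders hR (by lia)
  obtain ⟨hLL', -, hRR'⟩ := (append_cons_inj_of_notMem hbL hbR).1 h
  exact ⟨hLL', hRR'⟩

theorem card_avoiders_capped_succ (P : List ℕ → Prop) (a n : ℕ) :
    (avoiders (Capped P) a (n + 1)).card = ∑ p ∈ Finset.HasAntidiagonal.antidiagonal n,
      (avoiders P (a + p.2) p.1).card * (avoiders (Capped P) a p.2).card := by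
  rw [avoiders_capped_succ, Finset.card_biUnion]
  · refine Finset.sum_congr rfl fun p hp => Finset.card_image₂_iff.2 ?_
    rintro ⟨L, R⟩ ⟨hL, hR⟩ ⟨L', R'⟩ - h
    have hp := Finset.HasAntidiagonal.mem_antidiagonal.1 hp
    exact Prod.ext_iff.2 (eq_and_eq_of_append_cons_eq hL hR (by lia) h)
  · rintro ⟨i, j⟩ hp ⟨i', j'⟩ - hne
    have hp := Finset.HasAntidiagonal.mem_antidiagonal.1 hp
    refine Finset.disjoint_left.2 fun w hw hw' => hne ?_
    obtain ⟨L, hL, R, hR, rfl⟩ := Finset.mem_image₂.1 hw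
    obtain ⟨L', hL', R', hR', h⟩ := Finset.mem_image₂.1 hw'
    obtain ⟨rfl, rfl⟩ := eq_and_eq_of_append_cons_eq hL hR (by lia) h.symm
    exact Prod.ext ((length_of_mem_avoiders hL).symm.trans (length_of_mem_avoiders hL'))
      ((length_of_mem_avoiders hR).symm.trans (length_of_mem_avoiders hR'))

theorem card_avoiders_zero (h : Avoids P []) : (avoiders P a 0).card = 1 := by
  refine Finset.card_eq_one.2 ⟨[], Finset.ext fun w => ?_⟩
  simp only [mem_avoiders, range'_zero, perm_nil, Finset.mem_singleton, and_iff_left_iff_imp]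
  rintro rfl
  exact ⟨.nil, h⟩

theorem card_avoiders_one (h : Avoids P [a]) : (avoiders P a 1).card = 1 := by
  refine Finset.card_eq_one.2 ⟨[a], Finset.ext fun w => ?_⟩
  simp only [mem_avoiders, range'_one, perm_singleton, Finset.mem_singleton, and_iff_left_iff_imp]
  rintro rfl
  exact ⟨triplewise_singleton _ _, h⟩

/-- `F` is the generating function, by length, of the words avoiding `132` and `P`, whichever
interval of letters is used. -/
def HasGenFun (P : List ℕ → Prop) (F : ℚ⟦X⟧) : Prop :=
  ∀ a n, ((avoiders P a n).card : ℚ) = F.coeff n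

theorem hasGenFun_length_eq_two : HasGenFun (fun v => v.length = 2) (1 + PowerSeries.X) := by
  rintro a (_ | _ | n)
  · simp [card_avoiders_zero, avoids_length_eq_iff]
  · simp [card_avoiders_one, avoids_length_eq_iff, PowerSeries.coeff_one]
  · have hempty : avoiders (fun v => v.length = 2) a (n + 2) = ∅ :=
      Finset.eq_empty_of_forall_notMem fun w hw => by
        have hlt := avoids_length_eq_iff.1 (mem_avoiders.1 hw).2.2
        have hlen := length_of_mem_avoiders hw
        lia
    simp [hempty, PowerSeries.coeff_one, PowerSeries.coeff_X]

theorem HasGenFun.capped {F G : ℚ⟦X⟧} (hF : HasGenFun P F) (hG : G = 1 + PowerSeries.X * (F * G)) :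
    HasGenFun (Capped P) G := by
  intro a n
  induction n using Nat.strong_induction_on with
  | _ n ih =>
    rw [hG]
    cases n with
    | zero => simp [card_avoiders_zero (avoids_capped_nil P)]
    | succ n =>
      rw [map_add, PowerSeries.coeff_succ_X_mul, PowerSeries.coeff_mul,
        card_avoiders_capped_succ, PowerSeries.coeff_one, if_neg n.succ_ne_zero, zero_add]
      push_cast
      refine Finset.sum_congr rfl fun p hp => ?_
      have hp := Finset.HasAntidiagonal.mem_antidiagonal.1 hp
      rw [hF, ih p.2 (by lia)]

end Counting

section AlmostIncreasing

variable {α : Type*}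

/-- The words obtained from a word of length two by appending `m` successive new maxima. For words
with distinct letters these are the words order-isomorphic to `12⋯(m+2)` or `213⋯(m+2)`. -/
def AlmostIncreasing [LT α] : ℕ → List α → Prop
  | 0 => fun v => v.length = 2
  | m + 1 => Capped (AlmostIncreasing m)

theorem AlmostIncreasing.length_eq [LT α] {m : ℕ} {v : List α} (hv : AlmostIncreasing m v) :
    v.length = m + 2 := by
  induction m generalizing v with
  | zero => exact hv
  | succ m ih =>
    obtain ⟨u, z, rfl, hu, -⟩ := hv
    simp [ih hu]

theorem almostIncreasing_ofFn_iff [LT α] {m : ℕ} (g : Fin (m + 2) → α) :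
    AlmostIncreasing m (ofFn g) ↔ ∀ i j : Fin (m + 2), i < j → 2 ≤ j.val → g i < g j := by
  induction m with
  | zero => exact ⟨fun _ i j _ hj => by lia, fun _ => length_ofFn⟩
  | succ m ih =>
    rw [AlmostIncreasing, capped_ofFn_succ, ih]
    constructor
    · rintro ⟨hinit, hlast⟩ i j hij hj
      obtain ⟨i, rfl⟩ := Fin.exists_castSucc_eq.2 (hij.trans_le (Fin.le_last j)).ne
      induction j using Fin.lastCases with
      | last => exact hlast i
      | cast j => exact hinit i j hij hj
    · exact fun h => ⟨fun i j hij hj => h _ _ hij hj,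
        fun i => h _ _ (Fin.castSucc_lt_last i) (by simp)⟩

theorem swap_zero_one_apply_of_two_le {m : ℕ} {j : Fin (m + 2)} (hj : 2 ≤ j.val) :
    Equiv.swap 0 1 j = j :=
  Equiv.swap_apply_of_ne_of_ne (Fin.ne_of_val_ne (by grind))
    (Fin.ne_of_val_ne (by grind [Fin.val_one]))

theorem swap_zero_one_lt_swap_zero_one {m : ℕ} {i j : Fin (m + 2)} (hij : i < j)
    (hj : 2 ≤ j.val) : Equiv.swap 0 1 i < Equiv.swap 0 1 j := by
  rw [swap_zero_one_apply_of_two_le hj, Equiv.swap_apply_def]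
  split_ifs
  · exact Fin.lt_def.2 (by grind [Fin.val_one])
  · exact Fin.lt_def.2 (by grind [Fin.val_one])
  · exact hij

theorem strictMono_of_zero_lt_one [Preorder α] {m : ℕ} {g : Fin (m + 2) → α} (h01 : g 0 < g 1)
    (h : ∀ i j : Fin (m + 2), i < j → 2 ≤ j.val → g i < g j) : StrictMono g := by
  intro i j hij
  by_cases hj : 2 ≤ j.val
  · exact h i j hij hj
  · obtain rfl : j = 1 := Fin.ext (by grind [Fin.val_one])
    obtain rfl : i = 0 := Fin.ext (by simpa using hij)
    exact h01

theorem almostIncreasing_ofFn_iff_of_injective [LinearOrder α] {m : ℕ} {g : Fin (m + 2) → α}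
    (hg : Function.Injective g) :
    AlmostIncreasing m (ofFn g) ↔ (∀ i j, i < j ↔ g i < g j) ∨
      ∀ i j, Equiv.swap (0 : Fin (m + 2)) 1 i < Equiv.swap 0 1 j ↔ g i < g j := by
  rw [almostIncreasing_ofFn_iff]
  constructor
  · intro h
    obtain h01 | h10 := lt_or_gt_of_ne (hg.ne (zero_ne_one (α := Fin (m + 2))))
    · exact .inl fun i j => (strictMono_of_zero_lt_one h01 h).lt_iff_lt.symm
    · have hmono : StrictMono (g ∘ Equiv.swap 0 1) :=
        strictMono_of_zero_lt_one (by simpa using h10) fun i j hij hj =>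
          h _ _ (swap_zero_one_lt_swap_zero_one hij hj) (by rwa [swap_zero_one_apply_of_two_le hj])
      exact .inr fun i j => by
        simpa using (hmono.lt_iff_lt (a := Equiv.swap 0 1 i) (b := Equiv.swap 0 1 j)).symm
  · rintro (h | h) i j hij hj
    · exact (h i j).1 hij
    · exact (h i j).1 (swap_zero_one_lt_swap_zero_one hij hj)

end AlmostIncreasing

section Permutations

variable {n : ℕ}

/-- The one-line notation of `π`, with letters `0, …, n - 1`. -/
def word (π : Equiv.Perm (Fin n)) : List ℕ :=
  ofFn fun i => (π i : ℕ)

theorem word_injective : Function.Injective (word (n := n)) := fun _ _ h =>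
  Equiv.ext fun i => Fin.ext (congrFun (ofFn_injective h) i)

theorem word_perm_range' (π : Equiv.Perm (Fin n)) : word π ~ range' 0 n := by
  refine (perm_ext_iff_of_nodup (nodup_ofFn.2 (Fin.val_injective.comp π.injective))
    nodup_range').2 fun x => ?_
  simp only [mem_ofFn, mem_range'_1, zero_le, zero_add, true_and]
  exact ⟨fun ⟨i, hi⟩ => hi ▸ (π i).2, fun hx => ⟨π.symm ⟨x, hx⟩, by simp⟩⟩

theorem exists_word_eq {w : List ℕ} (hw : w ~ range' 0 n) :
    ∃ π : Equiv.Perm (Fin n), word π = w := by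
  obtain rfl : w.length = n := by simpa using hw.length_eq
  let g : Fin w.length → Fin w.length := fun i =>
    ⟨w.get i, by simpa using (le_and_lt_of_mem_of_perm_range' hw (get_mem w i)).2⟩
  have hg : Function.Injective g := fun i j hij =>
    nodup_iff_injective_get.1 (hw.symm.nodup nodup_range') (congrArg Fin.val hij)
  exact ⟨Equiv.ofBijective g (Finite.injective_iff_bijective.1 hg), ofFn_get w⟩

theorem avoids132_word_iff (π : Equiv.Perm (Fin n)) :
    Avoids132 (word π) ↔ ¬ Contains p132 π := by
  rw [word, avoids132_ofFn_iff]
  constructor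
  · rintro h ⟨f, hf, hocc⟩
    exact h (f 0) (f 1) (f 2) (hf (by decide)) (hf (by decide))
      ⟨(hocc 0 2).1 (by decide), (hocc 2 1).1 (by decide)⟩
  · rintro h i j k hij hjk ⟨hik, hkj⟩
    have hmono : StrictMono ![i, j, k] := by
      simp [Fin.strictMono_iff_lt_succ, Fin.forall_fin_two, hij, hjk]
    refine h ⟨![i, j, k], hmono, fun a b => ?_⟩
    have hp132 : ⇑p132 = ![0, 2, 1] := rfl
    fin_cases a <;> fin_cases b <;> simp [hp132] <;> lia

theorem avoids_almostIncreasing_word_iff {m : ℕ} (π : Equiv.Perm (Fin n)) :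
    Avoids (AlmostIncreasing m) (word π) ↔ ¬ Contains (1 : Equiv.Perm (Fin (m + 2))) π ∧
      ¬ Contains (Equiv.swap (0 : Fin (m + 2)) 1) π := by
  have hinj : ∀ f : Fin (m + 2) → Fin n, StrictMono f →
      Function.Injective fun i => (π (f i) : ℕ) := fun f hf =>
    Fin.val_injective.comp (π.injective.comp hf.injective)
  rw [word, avoids_ofFn_iff fun v => AlmostIncreasing.length_eq, ← not_or, Contains, Contains,
    ← exists_or, not_exists]
  refine forall_congr' fun f => ?_
  rw [IsOccurrence, IsOccurrence, ← and_or_left, not_and]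
  exact forall_congr' fun hf => not_congr (almostIncreasing_ofFn_iff_of_injective (hinj f hf))

theorem card_subtype_word_avoids (P : List ℕ → Prop) (n : ℕ) :
    Nat.card {π : Equiv.Perm (Fin n) // Avoids132 (word π) ∧ Avoids P (word π)} =
      (avoiders P 0 n).card := by
  classical
  rw [Nat.card_eq_fintype_card, Fintype.card_subtype,
    ← Finset.card_image_of_injective _ word_injective]
  congr 1
  ext w
  simp only [Finset.mem_image, Finset.mem_filter_univ, mem_avoiders]
  constructor
  · rintro ⟨π, hπ, rfl⟩
    exact ⟨word_perm_range' π, hπ⟩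
  · rintro ⟨hperm, hw⟩
    obtain ⟨π, rfl⟩ := exists_word_eq hperm
    exact ⟨π, hw, rfl⟩

end Permutations

section Chebyshev

/-- The continued fraction `F₀ = 1 + X`, `F_{m+1} = 1 / (1 - X F_m)`, whose `m`-th stage counts the
words avoiding `132` and `AlmostIncreasing m`. -/
noncomputable def genFun : ℕ → ℚ⟦X⟧
  | 0 => 1 + PowerSeries.X
  | m + 1 => (1 - PowerSeries.X * genFun m)⁻¹

theorem genFun_succ_mul (m : ℕ) : genFun (m + 1) * (1 - PowerSeries.X * genFun m) = 1 :=
  PowerSeries.inv_mul_cancel _ (by simp)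

theorem hasGenFun_almostIncreasing (m : ℕ) : HasGenFun (AlmostIncreasing m) (genFun m) := by
  induction m with
  | zero => exact hasGenFun_length_eq_two
  | succ m ih => exact ih.capped (by linear_combination genFun_succ_mul m)

/-- The polynomial `q_{m+1} = p_{m+1} - X² p_{m-1}` as a power series; the index is shifted because
`pU (j + 1)` is `p_j` and `p_{-1}` is the first polynomial available. -/
noncomputable def qU (m : ℕ) : ℚ⟦X⟧ :=
  (pU (m + 2) : ℚ⟦X⟧) - PowerSeries.X ^ 2 * (pU m : ℚ⟦X⟧)

theorem coe_pU_add_two (m : ℕ) :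
    (pU (m + 2) : ℚ⟦X⟧) = (pU (m + 1) : ℚ⟦X⟧) - PowerSeries.X * (pU m : ℚ⟦X⟧) := by
  simp [pU]

theorem qU_add_two (m : ℕ) : qU (m + 2) = qU (m + 1) - PowerSeries.X * qU m := by
  simp only [qU]
  linear_combination coe_pU_add_two (m + 2) - PowerSeries.X ^ 2 * coe_pU_add_two m

theorem genFun_succ_mul_qU (m : ℕ) : genFun (m + 1) * qU (m + 1) = qU m := by
  induction m with
  | zero =>
    have h0 : qU 0 = 1 := by simp [qU, pU]
    have h1 : qU 1 = 1 - PowerSeries.X * genFun 0 := by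
      simp only [qU, pU, genFun]
      push_cast
      ring
    rw [h0, h1, genFun_succ_mul]
  | succ m ih =>
    rw [qU_add_two]
    linear_combination
      qU (m + 1) * genFun_succ_mul (m + 1) + PowerSeries.X * genFun (m + 2) * ih

theorem mk_card_avoiding_eq_genFun (m : ℕ) :
    (PowerSeries.mk fun n => ((Nat.card {π : Equiv.Perm (Fin n) //
      ¬ Contains p132 π ∧ ¬ Contains (1 : Equiv.Perm (Fin (m + 2))) π ∧
        ¬ Contains (Equiv.swap (0 : Fin (m + 2)) 1) π} : ℕ) : ℚ)) = genFun m := by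
  ext n
  simp only [PowerSeries.coeff_mk, ← avoids132_word_iff, ← avoids_almostIncreasing_word_iff]
  rw [card_subtype_word_avoids, hasGenFun_almostIncreasing]

end Chebyshev

end PatternWord

/-- Write `k = m + 3 ≥ 3`. Let `12⋯k` be the identity of `S_k` and
`213⋯k = swap 0 1` (zero-indexed). With `q_j = p_j − X²·p_{j−2}` (and `pU (j+1) = p_j`),
the generating function `F` for permutations avoiding `132`, `12⋯k` and `213⋯k`
satisfies `F·q_{k−1} = q_{k−2}`. -/
theorem stmt17 (m : ℕ) :
    (PowerSeries.mk fun n => ((Nat.card {π : Equiv.Perm (Fin n) //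
        ¬ Contains p132 π ∧ ¬ Contains (1 : Equiv.Perm (Fin (m + 3))) π ∧
          ¬ Contains (Equiv.swap (0 : Fin (m + 3)) 1) π} : ℕ) : ℚ))
      * ((pU (m + 3) : PowerSeries ℚ)
          - PowerSeries.X ^ 2 * (pU (m + 1) : PowerSeries ℚ))
      = (pU (m + 2) : PowerSeries ℚ)
          - PowerSeries.X ^ 2 * (pU m : PowerSeries ℚ) := by
  rw [PatternWord.mk_card_avoiding_eq_genFun (m + 1)]
  exact PatternWord.genFun_succ_mul_qU m
end
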